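/- There exist universal constants c₀, c₁ ∈ (0,1] and c₂ ≥ 1 with the following property. Let u be a positive integer, let r, r₁ be positive reals with r₁ = α²·r for some α ≥ 1 and r₁ ≤ u, and let γ > 0 satisfy γ ≤ c₀/(2α). Let D be a probability distribution on {1,…,u} satisfying ∑_{i ≤ u−r₁, i ∈ supp(D)} D(i) ≤ 1/2 + γ, and suppose the set {1,…,u−r₁} \ supp(D) has at least r elements; let F_r denote its r smallest elements. If h is a uniformly random vector in {−1,1}^u (i.i.d. uniform entries), then ℙ[ ∑_{i ∈ supp(D)} D(i)·h(i) ≥ 2γ and #{i ∈ F_r : h(i) = −1} ≥ (1/2 + αγ/2)·r ] ≥ (c₁²/2)·exp(−8·c₂·γ²·r₁). -/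

import Mathlib

section Helpers
set_option linter.unusedSectionVars false
set_option linter.unusedSimpArgs false
variable {ι : Type} [Fintype ι] [DecidableEq ι]

noncomputable def Ex (f : (ι → Bool) → ℝ) : ℝ := (∑ h, f h) / (Fintype.card (ι → Bool) : ℝ)

lemma card_pos_aux : (0 : ℝ) < (Fintype.card (ι → Bool) : ℝ) := by
  exact_mod_cast Fintype.card_pos

lemma Ex_add (f g : (ι → Bool) → ℝ) : Ex (fun h => f h + g h) = Ex f + Ex g := by
  unfold Ex; rw [Finset.sum_add_distrib, add_div]

lemma Ex_cmul (c : ℝ) (f : (ι → Bool) → ℝ) : Ex (fun h => c * f h) = c * Ex f := by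
  unfold Ex; rw [← Finset.mul_sum, mul_div_assoc]

lemma Ex_const (c : ℝ) : Ex (fun _ : ι → Bool => c) = c := by
  unfold Ex
  have := card_pos_aux (ι := ι)
  rw [Finset.sum_const, Finset.card_univ, nsmul_eq_mul]
  field_simp

lemma Ex_mono {f g : (ι → Bool) → ℝ} (hfg : ∀ h, f h ≤ g h) : Ex f ≤ Ex g := by
  unfold Ex
  have := card_pos_aux (ι := ι)
  gcongr with h _
  exact hfg h

lemma Ex_cs (f g : (ι → Bool) → ℝ) :
    Ex (fun h => f h * g h) ^ 2 ≤ Ex (fun h => f h ^ 2) * Ex (fun h => g h ^ 2) := by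
  unfold Ex
  have := card_pos_aux (ι := ι)
  have h2 := Finset.sum_mul_sq_le_sq_mul_sq Finset.univ f g
  rw [div_pow, div_mul_div_comm, ← sq]
  gcongr

lemma Ex_indep (A : Finset ι) (f g : (ι → Bool) → ℝ)
    (hf : ∀ h h' : ι → Bool, (∀ i ∈ A, h i = h' i) → f h = f h')
    (hg : ∀ h h' : ι → Bool, (∀ i, i ∉ A → h i = h' i) → g h = g h') :
    Ex (fun h => f h * g h) = Ex f * Ex g := by
  have hc := card_pos_aux (ι := ι)
  have key : (∑ h, f h) * (∑ h, g h) =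
      (Fintype.card (ι → Bool) : ℝ) * ∑ h, f h * g h := by
    rw [Finset.sum_mul_sum, ← Finset.sum_product']
    let φ : (ι → Bool) × (ι → Bool) → (ι → Bool) × (ι → Bool) :=
      fun p => (fun i => if i ∈ A then p.1 i else p.2 i, fun i => if i ∈ A then p.2 i else p.1 i)
    have hφ : Function.Involutive φ := by
      rintro ⟨x, y⟩
      simp only [φ, Prod.mk.injEq]
      constructor <;> funext i <;> by_cases hi : i ∈ A <;> simp [hi]
    have h1 : ∑ p : (ι → Bool) × (ι → Bool), f (φ p).1 * g (φ p).1 =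
        ∑ p : (ι → Bool) × (ι → Bool), f p.1 * g p.1 :=
      Equiv.sum_comp hφ.toPerm (fun p : (ι → Bool) × (ι → Bool) => f p.1 * g p.1)
    have h2 : ∑ p : (ι → Bool) × (ι → Bool), f p.1 * g p.1 =
      (Fintype.card (ι → Bool) : ℝ) * ∑ h, f h * g h := by
      rw [Fintype.sum_prod_type]
      simp only [Finset.sum_const, Finset.card_univ, nsmul_eq_mul]
      rw [← Finset.mul_sum]
    rw [← h2, ← h1]
    simp only [Finset.univ_product_univ]
    apply Finset.sum_congr rfl
    rintro ⟨x, y⟩ _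
    congr 1
    · apply hf
      intro i hi
      simp [φ, hi]
    · apply hg
      intro i hi
      simp [φ, hi]
  unfold Ex
  rw [div_mul_div_comm, key]
  field_simp

lemma Ex_coord (j : ι) (g : Bool → ℝ) : Ex (fun h : ι → Bool => g (h j)) = (g true + g false) / 2 := by
  let φ : (ι → Bool) → (ι → Bool) := fun h => Function.update h j (!(h j))
  have hφ : Function.Involutive φ := by
    intro x
    simp [φ]
  have h1 : Ex (fun h : ι → Bool => g (!(h j))) = Ex (fun h : ι → Bool => g (h j)) := by
    unfold Ex
    congr 1
    rw [← Equiv.sum_comp hφ.toPerm (fun h : ι → Bool => g (h j))]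
    apply Finset.sum_congr rfl
    intro x _
    simp [φ]
  have h2 := Ex_add (fun h : ι → Bool => g (h j)) (fun h : ι → Bool => g (!(h j)))
  have h3 : (fun h : ι → Bool => g (h j) + g (!(h j))) = fun _ => g true + g false := by
    funext h
    cases h j <;> simp [add_comm]
  rw [h3, Ex_const, h1] at h2
  linarith

lemma Ex_split (A : Finset ι) (j : ι) (hj : j ∉ A) (f : (ι → Bool) → ℝ) (g : Bool → ℝ)
    (hf : ∀ h h' : ι → Bool, (∀ i ∈ A, h i = h' i) → f h = f h') :
    Ex (fun h => f h * g (h j)) = Ex f * ((g true + g false) / 2) := by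
  rw [Ex_indep A f (fun h => g (h j)) hf, Ex_coord]
  intro h h' hh
  rw [hh j hj]

noncomputable def LL (s : Bool → ℝ) (β : ℝ) (A : Finset ι) (h : ι → Bool) : ℝ :=
  ∏ i ∈ A, (1 + β * s (h i))

noncomputable def XX (s : Bool → ℝ) (β : ℝ) (a : ι → ℝ) (A : Finset ι) (h : ι → Bool) : ℝ :=
  ∑ i ∈ A, a i * (s (h i) - β)

lemma LL_dep (s : Bool → ℝ) (β : ℝ) (A : Finset ι) (h h' : ι → Bool)
    (hh : ∀ i ∈ A, h i = h' i) : LL s β A h = LL s β A h' :=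
  Finset.prod_congr rfl fun i hi => by rw [hh i hi]

lemma XX_dep (s : Bool → ℝ) (β : ℝ) (a : ι → ℝ) (A : Finset ι) (h h' : ι → Bool)
    (hh : ∀ i ∈ A, h i = h' i) : XX s β a A h = XX s β a A h' :=
  Finset.sum_congr rfl fun i hi => by rw [hh i hi]

lemma LL_sq (s : Bool → ℝ) (hs1 : s true ^ 2 = 1) (hs2 : s false = - s true) (β : ℝ)
    (A : Finset ι) : Ex (fun h => LL s β A h ^ 2) = (1 + β ^ 2) ^ A.card := by
  induction A using Finset.induction_on with
  | empty => simp [LL, Ex_const]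
  | insert j A hj ih =>
    obtain ⟨g, hg⟩ : ∃ g : Bool → ℝ, ∀ b, g b = (1 + β * s b) ^ 2 := ⟨_, fun _ => rfl⟩
    have : (fun h : ι → Bool => LL s β (insert j A) h ^ 2) =
        fun h => LL s β A h ^ 2 * g (h j) := by
      funext h
      simp only [LL, hg]
      rw [Finset.prod_insert hj]
      ring
    rw [this, Ex_split A j hj (fun h => LL s β A h ^ 2) g, ih, Finset.card_insert_of_notMem hj, hg, hg, hs2, pow_succ]
    · congr 1
      linear_combination β ^ 2 * hs1
    · intro h h' hh
      rw [LL_dep s β A h h' hh]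

lemma moments (s : Bool → ℝ) (hs1 : s true ^ 2 = 1) (hs2 : s false = - s true) (β : ℝ)
    (hβ : β ^ 2 ≤ 1 / 4) (a : ι → ℝ) (A : Finset ι) :
    Ex (fun h => LL s β A h) = 1 ∧ Ex (fun h => LL s β A h * XX s β a A h) = 0 ∧
    Ex (fun h => LL s β A h * XX s β a A h ^ 2) = (1 - β ^ 2) * ∑ i ∈ A, a i ^ 2 ∧
    Ex (fun h => LL s β A h * XX s β a A h ^ 4) ≤ 3 * ((1 - β ^ 2) * ∑ i ∈ A, a i ^ 2) ^ 2 := by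
  induction A using Finset.induction_on with
  | empty => simp [LL, XX, Ex_const]
  | insert j A hj ih =>
    obtain ⟨i0, i1, i2, i4⟩ := ih
    have hL : ∀ h : ι → Bool, LL s β (insert j A) h = LL s β A h * (1 + β * s (h j)) := by
      intro h
      simp only [LL]
      rw [Finset.prod_insert hj]
      ring
    have hX : ∀ h : ι → Bool, XX s β a (insert j A) h = XX s β a A h + a j * (s (h j) - β) := by
      intro h
      simp only [XX]
      rw [Finset.sum_insert hj]
      ring
    have hsp : ∀ (k : ℕ) (g : Bool → ℝ), Ex (fun h => (LL s β A h * XX s β a A h ^ k) * g (h j)) =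
        Ex (fun h => LL s β A h * XX s β a A h ^ k) * ((g true + g false) / 2) := by
      intro k g
      apply Ex_split A j hj
      intro h h' hh
      rw [LL_dep s β A h h' hh, XX_dep s β a A h h' hh]
    have e0 : Ex (fun h => LL s β A h * XX s β a A h ^ 0) = 1 := by simpa using i0
    have e1 : Ex (fun h => LL s β A h * XX s β a A h ^ 1) = 0 := by simpa using i1
    -- moments of the single coordinate
    set t := s true with ht
    obtain ⟨g0, hg0⟩ : ∃ g : Bool → ℝ, ∀ b, g b = 1 + β * s b := ⟨_, fun _ => rfl⟩
    obtain ⟨g1, hg1⟩ : ∃ g : Bool → ℝ, ∀ b, g b = (1 + β * s b) * (a j * (s b - β)) := ⟨_, fun _ => rfl⟩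
    obtain ⟨g2, hg2⟩ : ∃ g : Bool → ℝ, ∀ b, g b = (1 + β * s b) * (a j * (s b - β)) ^ 2 := ⟨_, fun _ => rfl⟩
    obtain ⟨g3, hg3⟩ : ∃ g : Bool → ℝ, ∀ b, g b = (1 + β * s b) * (a j * (s b - β)) ^ 3 := ⟨_, fun _ => rfl⟩
    obtain ⟨g4, hg4⟩ : ∃ g : Bool → ℝ, ∀ b, g b = (1 + β * s b) * (a j * (s b - β)) ^ 4 := ⟨_, fun _ => rfl⟩
    have G0 : (g0 true + g0 false) / 2 = 1 := by
      simp only [hg0, hg1, hg2, hg4, hs2, ← ht]; ring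
    have G1 : (g1 true
        + g1 false) / 2 = 0 := by
      simp only [hg0, hg1, hg2, hg4, hs2, ← ht]; linear_combination (β * a j) * hs1
    have G2 : (g2 true
        + g2 false) / 2 = (1 - β ^ 2) * a j ^ 2 := by
      simp only [hg0, hg1, hg2, hg4, hs2, ← ht]; linear_combination (a j ^ 2 * (1 - 2 * β ^ 2)) * hs1
    have G4 : (g4 true
        + g4 false) / 2
          = (1 - β ^ 2) * (1 + 3 * β ^ 2) * a j ^ 4 := by
      have h4 : t ^ 4 = 1 := by nlinarith
      simp only [hg0, hg1, hg2, hg4, hs2, ← ht]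
      linear_combination (a j ^ 4 * (6 * β ^ 2 - 4 * β ^ 4)) * hs1 + (a j ^ 4 * (1 - 4 * β ^ 2)) * h4
    refine ⟨?_, ?_, ?_, ?_⟩
    · have : (fun h : ι → Bool => LL s β (insert j A) h) =
        fun h => (LL s β A h * XX s β a A h ^ 0) * g0 (h j) := by
        funext h; rw [hL, hg0]; simp
      rw [this, hsp, G0, e0, mul_one]
    · have : (fun h : ι → Bool => LL s β (insert j A) h * XX s β a (insert j A) h) =
        fun h => (LL s β A h * XX s β a A h ^ 1) * g0 (h j)
          + (LL s β A h * XX s β a A h ^ 0) * g1 (h j) := by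
        funext h; rw [hL, hX]; simp only [hg0, hg1, hg2, hg3, hg4]; ring
      rw [this, Ex_add, hsp, hsp, G0, G1, e1]; ring
    · have : (fun h : ι → Bool => LL s β (insert j A) h * XX s β a (insert j A) h ^ 2) =
        fun h => (LL s β A h * XX s β a A h ^ 2) * g0 (h j)
          + (2 * ((LL s β A h * XX s β a A h ^ 1) * g1 (h j))
          + (LL s β A h * XX s β a A h ^ 0) * g2 (h j)) := by
        funext h; rw [hL, hX]; simp only [hg0, hg1, hg2, hg3, hg4]; ring
      rw [this, Ex_add, Ex_add, Ex_cmul, hsp, hsp, hsp, G0, G1, G2, e0, i2, Finset.sum_insert hj]; ring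
    · have : (fun h : ι → Bool => LL s β (insert j A) h * XX s β a (insert j A) h ^ 4) =
        fun h => (LL s β A h * XX s β a A h ^ 4) * g0 (h j)
          + (4 * ((LL s β A h * XX s β a A h ^ 3) * g1 (h j))
          + (6 * ((LL s β A h * XX s β a A h ^ 2) * g2 (h j))
          + (4 * ((LL s β A h * XX s β a A h ^ 1) * g3 (h j))
          + (LL s β A h * XX s β a A h ^ 0) * g4 (h j)))) := by
        funext h; rw [hL, hX]; simp only [hg0, hg1, hg2, hg3, hg4]; ring
      rw [this, Ex_add, Ex_add, Ex_add, Ex_add, Ex_cmul, Ex_cmul, Ex_cmul, hsp, hsp, hsp, hsp, hsp,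
        G0, G1, G2, G4, e0, e1, i2, Finset.sum_insert hj]
      have h5 : 0 ≤ (1 - β ^ 2) * a j ^ 4 * (2 - 6 * β ^ 2) := by
        have : 0 ≤ a j ^ 4 := by positivity
        apply mul_nonneg (mul_nonneg (by linarith) this) (by linarith)
      nlinarith

lemma poly_ineq (x : ℝ) : (1 / 4) * (x + x ^ 2 - x ^ 4 / 6) ≤ if 0 ≤ x then 1 else 0 := by
  split_ifs with hx
  · nlinarith [sq_nonneg (x ^ 2 - 15/4), sq_nonneg (x - 2), sq_nonneg (x-7/4)]
  · push Not at hx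
    have h1 : 0 ≤ 1 + x - x ^ 3 / 6 := by
      nlinarith [mul_nonneg (neg_nonneg.2 hx.le) (sq_nonneg (x + 3/2)), sq_nonneg (x + 3/2), sq_nonneg (x+1)]
    nlinarith

lemma tail_bound (s : Bool → ℝ) (hs1 : s true ^ 2 = 1) (hs2 : s false = - s true) (β : ℝ)
    (hβ : β ^ 2 ≤ 1 / 4) (a : ι → ℝ) (A : Finset ι) :
    1 / 64 * Real.exp (-(β ^ 2 * A.card)) ≤
      Ex (fun h : ι → Bool => if β * ∑ i ∈ A, a i ≤ ∑ i ∈ A, a i * s (h i) then 1 else 0) := by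
  have hev : (fun h : ι → Bool => if β * ∑ i ∈ A, a i ≤ ∑ i ∈ A, a i * s (h i) then (1:ℝ) else 0)
      = fun h => if 0 ≤ XX s β a A h then 1 else 0 := by
    funext h
    have : XX s β a A h = ∑ i ∈ A, a i * s (h i) - β * ∑ i ∈ A, a i := by
      unfold XX
      rw [Finset.mul_sum, ← Finset.sum_sub_distrib]
      exact Finset.sum_congr rfl fun i _ => by ring
    simp only [this, sub_nonneg]
  rw [hev]
  obtain ⟨m0, m1, m2, m4⟩ := moments s hs1 hs2 β hβ a A
  set V := (1 - β ^ 2) * ∑ i ∈ A, a i ^ 2 with hV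
  have hLnn : ∀ h : ι → Bool, 0 ≤ LL s β A h := by
    intro h
    apply Finset.prod_nonneg
    intro i _
    have : s (h i) ^ 2 = 1 := by cases h i <;> simp [hs1, hs2]
    nlinarith [sq_nonneg (β * s (h i) + 1), mul_pow β (s (h i)) 2]
  have hQ : 1 / 8 ≤ Ex (fun h : ι → Bool => LL s β A h * (if 0 ≤ XX s β a A h then 1 else 0)) := by
    have hSnn : 0 ≤ ∑ i ∈ A, a i ^ 2 := Finset.sum_nonneg fun i _ => sq_nonneg _
    rcases hSnn.eq_or_lt with h0 | h0
    · have hz := (Finset.sum_eq_zero_iff_of_nonneg (fun i _ => sq_nonneg (a i))).1 h0.symm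
      have : (fun h : ι → Bool => LL s β A h * (if 0 ≤ XX s β a A h then 1 else 0))
          = fun h => LL s β A h := by
        funext h
        have : XX s β a A h = 0 := Finset.sum_eq_zero fun i hi => by
          have := hz i hi
          simp at this
          simp [this]
        simp [this]
      rw [this, m0]; norm_num
    · have hVpos : 0 < V := mul_pos (by linarith) h0
      set σ := Real.sqrt V with hσ
      have hσpos : 0 < σ := Real.sqrt_pos.2 hVpos
      have hσ2 : σ ^ 2 = V := Real.sq_sqrt hVpos.le
      have hmono : Ex (fun h : ι → Bool => (1 / (4 * σ)) * (LL s β A h * XX s β a A h) +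
          ((1 / (4 * σ ^ 2)) * (LL s β A h * XX s β a A h ^ 2) +
           (-(1 / (24 * σ ^ 4))) * (LL s β A h * XX s β a A h ^ 4))) ≤
          Ex (fun h : ι → Bool => LL s β A h * (if 0 ≤ XX s β a A h then 1 else 0)) := by
        apply Ex_mono
        intro h
        have hp := poly_ineq (XX s β a A h / σ)
        have hiff : (0 ≤ XX s β a A h / σ) ↔ (0 ≤ XX s β a A h) := by
          rw [le_div_iff₀ hσpos, zero_mul]
        simp only [hiff] at hp
        have := mul_le_mul_of_nonneg_left hp (hLnn h)
        refine le_trans (le_of_eq ?_) this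
        field_simp
        ring
      rw [Ex_add, Ex_add, Ex_cmul, Ex_cmul, Ex_cmul, m1, m2] at hmono
      refine le_trans ?_ hmono
      have h4 : σ ^ 4 = V ^ 2 := by rw [← hσ2]; ring
      rw [hσ2, h4]
      have h5 : (1 / (24 * V ^ 2)) * Ex (fun h => LL s β A h * XX s β a A h ^ 4)
          ≤ (1 / (24 * V ^ 2)) * (3 * V ^ 2) := by gcongr
      have h6 : (1 / (24 * V ^ 2)) * (3 * V ^ 2) = 1 / 8 := by field_simp; norm_num
      have h7 : 1 / (4 * V) * V = 1 / 4 := by field_simp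
      rw [h7]
      linarith
  have hcs := Ex_cs (fun h : ι → Bool => LL s β A h) (fun h => if 0 ≤ XX s β a A h then 1 else 0)
  rw [LL_sq s hs1 hs2] at hcs
  have hind : (fun h : ι → Bool => (if 0 ≤ XX s β a A h then (1:ℝ) else 0) ^ 2)
      = fun h => if 0 ≤ XX s β a A h then 1 else 0 := by
    funext h; split_ifs <;> norm_num
  rw [hind] at hcs
  set P := Ex (fun h : ι → Bool => if 0 ≤ XX s β a A h then (1:ℝ) else 0) with hP
  have hPnn : 0 ≤ P := by
    rw [← Ex_const (ι := ι) 0]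
    apply Ex_mono
    intro h; split_ifs <;> norm_num
  have hexp : (1 + β ^ 2) ^ A.card ≤ Real.exp (β ^ 2 * A.card) := by
    rw [mul_comm, Real.exp_nat_mul]
    gcongr
    linarith [Real.add_one_le_exp (β ^ 2)]
  have h1 : 1 / 64 ≤ Real.exp (β ^ 2 * A.card) * P := by
    have : (1 + β ^ 2) ^ A.card * P ≤ Real.exp (β ^ 2 * A.card) * P := by gcongr
    nlinarith
  rw [Real.exp_neg, ← div_eq_mul_inv, div_le_iff₀ (Real.exp_pos _)]
  linarith

end Helpers

lemma card_rank_le {u : ℕ} (T : Finset (Fin u)) (r : ℝ) (hr : 0 < r) :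
    ((T.filter (fun i => ((T.filter (fun j => j < i)).card : ℝ) < r)).card : ℝ) ≤ r + 1 := by
  have h1 : (T.filter (fun i => ((T.filter (fun j => j < i)).card : ℝ) < r)).card ≤
      (Finset.range ⌈r⌉₊).card := by
    apply Finset.card_le_card_of_injOn (fun i => (T.filter (fun j => j < i)).card)
    · intro i hi
      simp only [Finset.coe_filter, Set.mem_ofPred_eq] at hi
      simp only [Finset.coe_range, Set.mem_Iio]
      exact Nat.lt_ceil.2 hi.2
    · have key : ∀ i ∈ T, ∀ j, i < j →
          (T.filter (fun k => k < i)).card < (T.filter (fun k => k < j)).card := by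
        intro i hi j hij
        apply Finset.card_lt_card
        rw [Finset.ssubset_iff_of_subset]
        · exact ⟨i, by simp [hi, hij], by simp⟩
        · intro k hk
          simp only [Finset.mem_filter] at hk ⊢
          exact ⟨hk.1, hk.2.trans hij⟩
      intro i hi j hj hij
      simp only [Finset.coe_filter, Set.mem_ofPred_eq] at hi hj
      simp only at hij
      rcases lt_trichotomy i j with h | h | h
      · have := key i hi.1 j h
        omega
      · exact h
      · have := key j hj.1 i h
        omega
  rw [Finset.card_range] at h1
  have h2 := Nat.ceil_lt_add_one hr.le
  have h3 : ((T.filter (fun i => ((T.filter (fun j => j < i)).card : ℝ) < r)).card : ℝ) ≤ ⌈r⌉₊ := by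
    exact_mod_cast h1
  linarith

lemma le_card_rank {u : ℕ} (T : Finset (Fin u)) (r : ℝ) (hT : r ≤ (T.card : ℝ)) :
    r ≤ ((T.filter (fun i => ((T.filter (fun j => j < i)).card : ℝ) < r)).card : ℝ) := by
  set G := T.filter (fun i => ¬ ((T.filter (fun j => j < i)).card : ℝ) < r) with hG
  rcases G.eq_empty_or_nonempty with h | h
  · have : T.filter (fun i => ((T.filter (fun j => j < i)).card : ℝ) < r) = T := by
      apply Finset.filter_true_of_mem
      intro i hi
      by_contra hc
      have : i ∈ G := by rw [hG, Finset.mem_filter]; exact ⟨hi, hc⟩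
      rw [h] at this
      simp at this
    rw [this]; exact hT
  · have hm := G.min'_mem h
    set i := G.min' h with hi
    have hm2 : i ∈ T ∧ ¬ ((T.filter (fun j => j < i)).card : ℝ) < r := by
      rw [hG, Finset.mem_filter] at hm; exact hm
    refine (not_lt.1 hm2.2).trans ?_
    have : (T.filter (fun j => j < i)).card ≤
        (T.filter (fun i => ((T.filter (fun j => j < i)).card : ℝ) < r)).card := by
      apply Finset.card_le_card
      intro k hk
      rw [Finset.mem_filter] at hk ⊢
      refine ⟨hk.1, ?_⟩
      by_contra hc
      have hkG : k ∈ G := by rw [hG, Finset.mem_filter]; exact ⟨hk.1, hc⟩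
      exact absurd (G.min'_le k hkG) (not_le.2 hk.2)
    exact_mod_cast this

lemma card_tail_le {u : ℕ} (r1 : ℝ) (h0 : 0 < r1) (h1 : r1 ≤ u) (A : Finset (Fin u))
    (hA : ∀ i ∈ A, ¬ (((i : ℕ) + 1 : ℝ) ≤ (u : ℝ) - r1)) : (A.card : ℝ) ≤ r1 + 1 := by
  have h2 : A.card ≤ (Finset.Ico ⌊(u : ℝ) - r1⌋₊ u).card := by
    apply Finset.card_le_card_of_injOn (fun i : Fin u => (i : ℕ))
    · intro i hi
      have := hA i hi
      push Not at this
      simp only [Finset.coe_Ico, Set.mem_Ico]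
      refine ⟨?_, i.2⟩
      have h3 : ⌊(u : ℝ) - r1⌋₊ < (i : ℕ) + 1 := by
        rw [Nat.floor_lt (by linarith)]
        push_cast; exact this
      omega
    · exact Fin.val_injective.injOn
  rw [Nat.card_Ico] at h2
  have h3 : A.card ≤ u - ⌊(u : ℝ) - r1⌋₊ := h2
  have h4 := Nat.lt_floor_add_one ((u : ℝ) - r1)
  have h6 : (⌊(u : ℝ) - r1⌋₊ : ℝ) ≤ u - r1 := Nat.floor_le (by linarith)
  have h5 : ⌊(u : ℝ) - r1⌋₊ ≤ u := by
    have : (⌊(u : ℝ) - r1⌋₊ : ℝ) ≤ u := by linarith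
    exact_mod_cast this
  have : (A.card : ℝ) ≤ (u : ℝ) - ⌊(u : ℝ) - r1⌋₊ := by
    rw [← Nat.cast_sub h5]; exact_mod_cast h3
  linarith

open scoped Classical in
lemma toMeasure_eq_Ex {u : ℕ} (S : Set (Fin u → Bool)) :
    (PMF.uniformOfFintype (Fin u → Bool)).toMeasure S =
      ENNReal.ofReal (Ex (fun h => if h ∈ S then 1 else 0)) := by
  have hm : MeasurableSet S := S.toFinite.measurableSet
  rw [PMF.toMeasure_uniformOfFintype_apply S hm]
  unfold Ex
  rw [ENNReal.ofReal_div_of_pos card_pos_aux, ENNReal.ofReal_natCast, Finset.sum_boole,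
    ENNReal.ofReal_natCast, Fintype.card_subtype]

open MeasureTheory

/-- The sign `±1` associated with a Boolean (`true ↦ 1`, `false ↦ -1`). -/
noncomputable def boolSign (b : Bool) : ℝ := if b then 1 else -1

set_option maxHeartbeats 1000000

open scoped Classical in
/-- A uniformly random hypothesis `h ∈ {-1,1}^u` simultaneously has
advantage `2γ` under `D` and at least `(1/2 + αγ/2)·r` minus signs on the `r` smallest
elements of `{1,…,u−r₁} \ supp(D)`, with probability at least `(c₁²/2)·exp(−8c₂γ²r₁)`. -/
theorem adaboost_bad_hypothesis_lemma :
    ∃ c0 c1 c2 : ℝ, 0 < c0 ∧ c0 ≤ 1 ∧ 0 < c1 ∧ c1 ≤ 1 ∧ 1 ≤ c2 ∧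
      ∀ (u : ℕ), 0 < u → ∀ r r1 α γ : ℝ,
        0 < r → 0 < r1 → 1 ≤ α → r1 = α ^ 2 * r → r1 ≤ (u : ℝ) →
        0 < γ → γ ≤ c0 / (2 * α) →
        ∀ D : Fin u → ℝ, (∀ i, 0 ≤ D i) → ∑ i, D i = 1 →
        (∑ i ∈ Finset.univ.filter
            (fun (i : Fin u) => ((i : ℕ) + 1 : ℝ) ≤ (u : ℝ) - r1 ∧ 0 < D i), D i) ≤ 1 / 2 + γ →
        ∀ T : Finset (Fin u),
          T = Finset.univ.filter
            (fun (i : Fin u) => ((i : ℕ) + 1 : ℝ) ≤ (u : ℝ) - r1 ∧ ¬ 0 < D i) →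
        r ≤ (T.card : ℝ) →
        ∀ F : Finset (Fin u),
          F = T.filter (fun i => ((T.filter (fun j => j < i)).card : ℝ) < r) →
        ENNReal.ofReal (c1 ^ 2 / 2 * Real.exp (-(8 * c2 * γ ^ 2 * r1))) ≤
          (PMF.uniformOfFintype (Fin u → Bool)).toMeasure
            {h | 2 * γ ≤ (∑ i ∈ Finset.univ.filter (fun i => 0 < D i),
                    D i * boolSign (h i)) ∧
                 (1 / 2 + α * γ / 2) * r ≤ ((F.filter (fun i => h i = false)).card : ℝ)} := by
  refine ⟨1 / 8, 1 / 1024, 9, by norm_num, by norm_num, by norm_num, by norm_num, by norm_num, ?_⟩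
  intro u hu r r1 α γ hr hr1 hα hr1e hr1u hγ hγle D hD hDsum hhead T hT hrT F hF
  have hαγ : α * γ ≤ 1 / 16 := by
    rw [le_div_iff₀ (by positivity)] at hγle
    linarith
  have hγ16 : γ ≤ 1 / 16 := by nlinarith
  have hαγ0 : 0 < α * γ := by positivity
  have hFT : F ⊆ T := by rw [hF]; exact Finset.filter_subset _ _
  have hFle : (F.card : ℝ) ≤ r + 1 := by
    rw [hF]; convert card_rank_le T r hr
  have hFge : r ≤ (F.card : ℝ) := by
    rw [hF]; convert le_card_rank T r hrT
  clear hF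
  set p : Fin u → Prop := fun i => ((i : ℕ) + 1 : ℝ) ≤ (u : ℝ) - r1 with hp
  set B := Finset.univ.filter (fun i : Fin u => p i ∧ 0 < D i) with hB
  set A := Finset.univ.filter (fun i : Fin u => ¬ p i ∧ 0 < D i) with hA
  set W := Finset.univ.filter (fun i : Fin u => 0 < D i) with hW
  have hAle : (A.card : ℝ) ≤ r1 + 1 := by
    apply card_tail_le r1 hr1 hr1u
    intro i hi
    rw [hA, Finset.mem_filter] at hi
    exact hi.2.1
  have hAB : Disjoint A B := by
    rw [Finset.disjoint_left]
    intro i h1 h2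
    simp only [hA, hB, Finset.mem_filter] at h1 h2
    exact h1.2.1 h2.2.1
  have hFW : ∀ i ∈ F, i ∉ A ∧ i ∉ B := by
    intro i hi
    have := hFT hi
    rw [hT, Finset.mem_filter] at this
    simp only [hA, hB, Finset.mem_filter]
    tauto
  have hWU : W = A ∪ B := by
    ext i
    simp only [hA, hB, hW, Finset.mem_filter, Finset.mem_union, Finset.mem_univ, true_and]
    tauto
  have hsplit : ∀ f : Fin u → ℝ, ∑ i ∈ W, f i = ∑ i ∈ A, f i + ∑ i ∈ B, f i := by
    intro f
    rw [hWU, Finset.sum_union hAB]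
  have hW1 : ∑ i ∈ W, D i = 1 := by
    rw [← hDsum]
    apply Finset.sum_subset (Finset.subset_univ _)
    intro i _ hi
    simp only [hW, Finset.mem_filter, Finset.mem_univ, true_and] at hi
    exact le_antisymm (not_lt.1 hi) (hD i)
  have hB1 : ∑ i ∈ B, D i ≤ 1 / 2 + γ := hhead
  have hA1 : 1 / 4 ≤ ∑ i ∈ A, D i := by
    have := hsplit D
    linarith
  have hb1 : boolSign true ^ 2 = 1 := by simp [boolSign]
  have hb2 : boolSign false = - boolSign true := by simp [boolSign]
  have t1 := tail_bound boolSign hb1 hb2 (8 * γ) (by nlinarith) D A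
  have t2 := tail_bound boolSign hb1 hb2 0 (by norm_num) D B
  have t3 := tail_bound (fun b => - boolSign b) (by simp [boolSign]) (by simp [boolSign])
    (α * γ) (by nlinarith) (fun _ => 1) F
  set f1 : (Fin u → Bool) → ℝ := fun h =>
    if 8 * γ * ∑ i ∈ A, D i ≤ ∑ i ∈ A, D i * boolSign (h i) then 1 else 0 with hf1
  set f2 : (Fin u → Bool) → ℝ := fun h =>
    if 0 * ∑ i ∈ B, D i ≤ ∑ i ∈ B, D i * boolSign (h i) then 1 else 0 with hf2
  set f3 : (Fin u → Bool) → ℝ := fun h =>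
    if α * γ * ∑ i ∈ F, (1 : ℝ) ≤ ∑ i ∈ F, 1 * (- boolSign (h i)) then 1 else 0 with hf3
  have d1 : ∀ h h' : Fin u → Bool, (∀ i ∈ A, h i = h' i) → f1 h = f1 h' := by
    intro h h' hh
    have : ∑ i ∈ A, D i * boolSign (h i) = ∑ i ∈ A, D i * boolSign (h' i) :=
      Finset.sum_congr rfl fun i hi => by rw [hh i hi]
    simp only [hf1, this]
  have d2 : ∀ h h' : Fin u → Bool, (∀ i ∈ B, h i = h' i) → f2 h = f2 h' := by
    intro h h' hh
    have : ∑ i ∈ B, D i * boolSign (h i) = ∑ i ∈ B, D i * boolSign (h' i) :=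
      Finset.sum_congr rfl fun i hi => by rw [hh i hi]
    simp only [hf2, this]
  have d3 : ∀ h h' : Fin u → Bool, (∀ i ∈ F, h i = h' i) → f3 h = f3 h' := by
    intro h h' hh
    have : ∑ i ∈ F, (1 : ℝ) * (- boolSign (h i)) = ∑ i ∈ F, 1 * (- boolSign (h' i)) :=
      Finset.sum_congr rfl fun i hi => by rw [hh i hi]
    simp only [hf3, this]
  have ind1 : Ex (fun h => f1 h * f2 h) = Ex f1 * Ex f2 := by
    apply Ex_indep A f1 f2 d1
    intro h h' hh
    exact d2 h h' fun i hi => hh i fun hi' => (Finset.disjoint_left.1 hAB) hi' hi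
  have ind2 : Ex (fun h => (f1 h * f2 h) * f3 h) = Ex (fun h => f1 h * f2 h) * Ex f3 := by
    apply Ex_indep (A ∪ B) (fun h => f1 h * f2 h) f3
    · intro h h' hh
      rw [d1 h h' fun i hi => hh i (Finset.mem_union_left _ hi),
        d2 h h' fun i hi => hh i (Finset.mem_union_right _ hi)]
    · intro h h' hh
      refine d3 h h' fun i hi => hh i ?_
      rw [Finset.mem_union]
      have := hFW i hi
      tauto
  rw [toMeasure_eq_Ex]
  apply ENNReal.ofReal_le_ofReal
  refine le_trans ?_ (Ex_mono (f := fun h => (f1 h * f2 h) * f3 h) ?_)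
  · rw [ind2, ind1]
    have hge : 1 / 64 * Real.exp (-((8 * γ) ^ 2 * A.card)) * (1 / 64 * Real.exp (-(0 ^ 2 * B.card)))
        * (1 / 64 * Real.exp (-((α * γ) ^ 2 * F.card))) ≤ Ex f1 * Ex f2 * Ex f3 := by
      have p1 := Real.exp_pos (-((8 * γ) ^ 2 * A.card))
      have p2 := Real.exp_pos (-((0:ℝ) ^ 2 * B.card))
      have p3 := Real.exp_pos (-((α * γ) ^ 2 * F.card))
      have q1 : 0 ≤ Ex f1 := le_trans (by positivity) t1
      have q2 : 0 ≤ Ex f2 := le_trans (by positivity) t2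
      gcongr
    refine le_trans ?_ hge
    have e1 : (8 * γ) ^ 2 * A.card ≤ 64 * γ ^ 2 * r1 + 1 / 4 := by
      have : (8 * γ) ^ 2 * A.card ≤ (8 * γ) ^ 2 * (r1 + 1) := by gcongr
      nlinarith
    have e3 : (α * γ) ^ 2 * F.card ≤ γ ^ 2 * r1 + 1 / 4 := by
      have : (α * γ) ^ 2 * F.card ≤ (α * γ) ^ 2 * (r + 1) := by gcongr
      have h2 : (α * γ) ^ 2 ≤ 1 / 4 := by nlinarith
      rw [hr1e]
      linarith
    have hx : 0 ≤ γ ^ 2 * r1 := by positivity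
    have hexp : Real.exp (-(8 * 9 * γ ^ 2 * r1)) * Real.exp (-(1 / 2)) ≤
        Real.exp (-((8 * γ) ^ 2 * A.card)) * Real.exp (-((α * γ) ^ 2 * F.card)) := by
      rw [← Real.exp_add, ← Real.exp_add]
      apply Real.exp_le_exp.2
      linarith
    have hhalf : 1 / 2 ≤ Real.exp (-(1 / 2)) := by
      have := Real.add_one_le_exp (-(1 / 2) : ℝ)
      linarith
    have hpos := Real.exp_pos (-(8 * 9 * γ ^ 2 * r1))
    have h0 : Real.exp (-((0:ℝ) ^ 2 * B.card)) = 1 := by simp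
    rw [h0]
    have hk := mul_le_mul_of_nonneg_left hhalf hpos.le
    generalize Real.exp (-(8 * 9 * γ ^ 2 * r1)) = K at *
    generalize Real.exp (-((8 * γ) ^ 2 * A.card)) = K1 at *
    generalize Real.exp (-((α * γ) ^ 2 * F.card)) = K2 at *
    generalize Real.exp (-(1 / 2)) = K3 at *
    have hfin : K * (1 / 2) ≤ K1 * K2 := hk.trans hexp
    clear hge t1 t2 t3
    linarith
  · intro h
    by_cases c1 : 8 * γ * ∑ i ∈ A, D i ≤ ∑ i ∈ A, D i * boolSign (h i)
    swap
    · simp only [hf1, if_neg c1]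
      split_ifs <;> norm_num
    by_cases c2 : 0 * ∑ i ∈ B, D i ≤ ∑ i ∈ B, D i * boolSign (h i)
    swap
    · simp only [hf2, if_neg c2]
      split_ifs <;> norm_num
    by_cases c3 : α * γ * ∑ i ∈ F, (1 : ℝ) ≤ ∑ i ∈ F, 1 * (- boolSign (h i))
    swap
    · simp only [hf3, if_neg c3]
      split_ifs <;> norm_num
    simp only [hf1, hf2, hf3, if_pos c1, if_pos c2, if_pos c3]
    rw [if_pos]
    · norm_num
    · refine ⟨?_, ?_⟩
      · rw [hsplit]
        nlinarith
      · have hs : ∑ i ∈ F, 1 * (- boolSign (h i)) =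
            2 * ((F.filter (fun i => h i = false)).card : ℝ) - F.card := by
          have : ∀ i ∈ F, 1 * (- boolSign (h i)) = 2 * (if h i = false then (1 : ℝ) else 0) - 1 := by
            intro i _
            cases h i <;> simp [boolSign] <;> norm_num
          rw [Finset.sum_congr rfl this, Finset.sum_sub_distrib, ← Finset.mul_sum, Finset.sum_boole]
          simp
        rw [hs] at c3
        simp only [Finset.sum_const, nsmul_eq_mul, mul_one] at c3
        have : (1 / 2 + α * γ / 2) * r ≤ (1 / 2 + α * γ / 2) * F.card := by gcongr
        linarith
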